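/- Let 0 < ε* and C > 0, let A ∈ ℝ^{n×z} have full column rank z with κ(A) = ‖A†‖‖A‖ satisfying Cε*κ(A) < 1, let B ∈ ℝ^{z×(q+1)}, and let y₀, …, y_q ∈ ℝⁿ. Suppose P̄ ∈ ℝ^{n×z} is such that there exist Ẽ ∈ ℝ^{z×n} and F̃ ∈ ℝ^{n×z} with P̄ + F̃ = (Aᵀ + Ẽ)†, ‖Ẽ‖ ≤ Cε*‖A‖, ‖F̃‖ ≤ Cε*‖P̄‖, and suppose f̄(yᵢ) = (1 + εᵢ)f(yᵢ) with |εᵢ| ≤ ε* for each i. Let f_M = max{|f(yᵢ)| : 0 ≤ i ≤ q}, 𝕗 = (f(y₀),…,f(y_q))ᵀ, 𝕗̄ = (f̄(y₀),…,f̄(y_q))ᵀ. Then ‖(Aᵀ)†B𝕗 − P̄B𝕗̄‖ ≤ √(q+1)·f_M·‖A†‖·‖B‖·ε* · ( √2·C·κ(A)/(1 − Cκ(A)ε*) + (C+1)/((1 − Cε*)(1 − Cκ(A)ε*)) ). -/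

import Mathlib

/-!
Write `D = A†`, `N = Aᵀ + E`, `Q = N†`, `k = C ε* κ(A) < 1`. Since `D A = 1`, every matrix `X` with
`z` rows satisfies `X = D (Nᵀ - Eᵀ) X`, hence `(1 - k) ‖X‖ ≤ ‖D‖ ‖Nᵀ X‖` (`norm_le_of_perturb`).
Applied to `X = Qᵀ Q`, for which `Nᵀ X = Q` and `‖X‖ = ‖Q‖²`, this gives `‖Q‖ ≤ ‖D‖ / (1 - k)`.

The perturbation `Q - Dᵀ` splits as `(1 - Q N) Eᵀ D Dᵀ - Q E Dᵀ`, two terms with orthogonal ranges,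
so the square of its norm is at most the sum of the squares of theirs; this is where `√2` comes from
(`norm_pinv_sub_le`). Finally
`Dᵀ B 𝕗 - P̄ B 𝕗̄ = (Dᵀ - Q) B 𝕗 + F B 𝕗 + P̄ B (𝕗 - 𝕗̄)` with `‖P̄‖ ≤ ‖Q‖ / (1 - C ε*)`, where
`C ε* < 1` because `κ(A) ≥ ‖D A‖ = 1`.
-/

open scoped Matrix
noncomputable section

/-- `N` is the Moore–Penrose pseudoinverse of `M` (the four Penrose equations). -/
def IsMPInv {m n : ℕ} (M : Matrix (Fin m) (Fin n) ℝ) (N : Matrix (Fin n) (Fin m) ℝ) : Prop :=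
  M * N * M = M ∧ N * M * N = N ∧ (M * N)ᵀ = M * N ∧ (N * M)ᵀ = N * M

/-- View a plain vector in `ℝⁿ` as an element of Euclidean space (with the ℓ² norm). -/
def toE {n : ℕ} (v : Fin n → ℝ) : EuclideanSpace ℝ (Fin n) :=
  (WithLp.equiv 2 (Fin n → ℝ)).symm v

/-- The spectral (ℓ² operator) norm of a matrix. -/
noncomputable def spec {m n : ℕ} (A : Matrix (Fin m) (Fin n) ℝ) : ℝ :=
  ‖LinearMap.toContinuousLinearMap (Matrix.toEuclideanLin A)‖

section Norms

open scoped Matrix.Norms.L2Operator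

variable {m n z : ℕ}

lemma spec_eq_norm (A : Matrix (Fin m) (Fin n) ℝ) : spec A = ‖A‖ := by
  rw [spec, Matrix.l2_opNorm_def]
  rfl

lemma norm_transpose_real (A : Matrix (Fin m) (Fin n) ℝ) : ‖Aᵀ‖ = ‖A‖ := by
  rw [← Matrix.conjTranspose_eq_transpose_of_trivial, Matrix.l2_opNorm_conjTranspose]

lemma norm_transpose_mul_self_real (A : Matrix (Fin m) (Fin n) ℝ) : ‖Aᵀ * A‖ = ‖A‖ * ‖A‖ := by
  rw [← Matrix.conjTranspose_eq_transpose_of_trivial, Matrix.l2_opNorm_conjTranspose_mul_self]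

lemma norm_toE_mulVec_le (A : Matrix (Fin m) (Fin n) ℝ) (v : Fin n → ℝ) :
    ‖toE (A *ᵥ v)‖ ≤ ‖A‖ * ‖toE v‖ :=
  Matrix.l2_opNorm_mulVec A (toE v)

lemma pinv_mul_eq_one {A : Matrix (Fin n) (Fin z) ℝ} {D : Matrix (Fin z) (Fin n) ℝ}
    (hrank : A.rank = z) (h : IsMPInv A D) : D * A = 1 := by
  have hinj : Function.Injective A.mulVec := by
    rw [Matrix.mulVec_injective_iff, linearIndependent_iff_card_eq_finrank_span,
      Set.finrank, ← Matrix.rank_eq_finrank_span_cols, hrank, Fintype.card_fin]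
  apply Matrix.toLin'.injective
  ext1 i
  ext1
  apply hinj
  simp only [Matrix.toLin'_apply, LinearMap.comp_apply]
  rw [Matrix.mulVec_mulVec, ← Matrix.mul_assoc, h.1, Matrix.mulVec_mulVec, Matrix.mul_one]

/-- When `‖D‖ ‖E‖ < 1`, this says that `(Aᵀ + E)ᵀ` is bounded below, like `A` itself. -/
lemma norm_le_of_perturb {A : Matrix (Fin n) (Fin z) ℝ} {D E : Matrix (Fin z) (Fin n) ℝ}
    (hDA : D * A = 1) (X : Matrix (Fin z) (Fin m) ℝ) :
    (1 - ‖D‖ * ‖E‖) * ‖X‖ ≤ ‖D‖ * ‖(Aᵀ + E)ᵀ * X‖ := by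
  have hX : X = D * ((Aᵀ + E)ᵀ * X) - D * (Eᵀ * X) := by
    rw [Matrix.transpose_add, Matrix.transpose_transpose, Matrix.add_mul, Matrix.mul_add,
      add_sub_cancel_right, ← Matrix.mul_assoc, hDA, Matrix.one_mul]
  have h1 : ‖X‖ ≤ ‖D‖ * ‖(Aᵀ + E)ᵀ * X‖ + ‖D‖ * (‖E‖ * ‖X‖) := by
    calc ‖X‖ = ‖D * ((Aᵀ + E)ᵀ * X) - D * (Eᵀ * X)‖ := by rw [← hX]
      _ ≤ ‖D * ((Aᵀ + E)ᵀ * X)‖ + ‖D * (Eᵀ * X)‖ := norm_sub_le _ _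
      _ ≤ _ := by
        gcongr
        · exact Matrix.l2_opNorm_mul _ _
        · refine (Matrix.l2_opNorm_mul _ _).trans ?_
          gcongr
          exact (Matrix.l2_opNorm_mul _ _).trans (by rw [norm_transpose_real])
  linarith

lemma norm_pinv_le {A : Matrix (Fin n) (Fin z) ℝ} {D E : Matrix (Fin z) (Fin n) ℝ}
    {Q : Matrix (Fin n) (Fin z) ℝ} (hDA : D * A = 1) (hQ : IsMPInv (Aᵀ + E) Q) :
    (1 - ‖D‖ * ‖E‖) * ‖Q‖ ≤ ‖D‖ := by
  have h := norm_le_of_perturb (E := E) hDA (Qᵀ * Q)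
  have h0 : (Aᵀ + E)ᵀ * (Qᵀ * Q) = Q := by
    rw [← Matrix.mul_assoc, ← Matrix.transpose_mul, hQ.2.2.2, hQ.2.1]
  rw [h0, norm_transpose_mul_self_real] at h
  rcases (norm_nonneg Q).eq_or_lt with h1 | h1
  · rw [← h1, mul_zero]
    exact norm_nonneg _
  · exact le_of_mul_le_mul_right (by linarith) h1

lemma sq_norm_sub_le_of_orthogonal {U W : Matrix (Fin m) (Fin n) ℝ} (h : Uᵀ * W = 0) :
    ‖W - U‖ ^ 2 ≤ ‖U‖ ^ 2 + ‖W‖ ^ 2 := by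
  have h' : Wᵀ * U = 0 := by
    rw [← Matrix.transpose_transpose U, ← Matrix.transpose_mul, h, Matrix.transpose_zero]
  have h2 : (W - U)ᵀ * (W - U) = Uᵀ * U + Wᵀ * W := by
    rw [Matrix.transpose_sub, Matrix.sub_mul, Matrix.mul_sub, Matrix.mul_sub, h, h']
    abel
  rw [sq, ← norm_transpose_mul_self_real, h2, sq, sq, ← norm_transpose_mul_self_real U,
    ← norm_transpose_mul_self_real W]
  exact norm_add_le _ _

lemma norm_le_one_of_projection {P : Matrix (Fin n) (Fin n) ℝ} (h : Pᵀ * P = P) : ‖P‖ ≤ 1 := by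
  have h1 := norm_transpose_mul_self_real P
  rw [h] at h1
  by_contra hc
  push Not at hc
  nlinarith

/-- Wedin-type bound for the pseudoinverse `Q` of a perturbation of `Aᵀ`, where `(Aᵀ)† = Dᵀ`. -/
lemma norm_pinv_sub_le {A : Matrix (Fin n) (Fin z) ℝ} {D E : Matrix (Fin z) (Fin n) ℝ}
    {Q : Matrix (Fin n) (Fin z) ℝ} (hDA : D * A = 1) (hD : IsMPInv A D)
    (hQ : IsMPInv (Aᵀ + E) Q) {r : ℝ} (hDr : ‖D‖ ≤ r) (hQr : ‖Q‖ ≤ r) :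
    ‖Q - Dᵀ‖ ≤ √2 * (‖E‖ * ‖D‖ * r) := by
  set N := Aᵀ + E with hN
  obtain ⟨hQ1, hQ2, hQ3, hQ4⟩ := hQ
  have hr : 0 ≤ r := (norm_nonneg _).trans hDr
  set P := 1 - Q * N with hP
  have hPt : Pᵀ = P := by rw [hP, Matrix.transpose_sub, hQ4, Matrix.transpose_one]
  have hPQ : P * Q = 0 := by rw [hP, Matrix.sub_mul, hQ2, Matrix.one_mul, sub_self]
  have hPP : P * P = P := by
    nth_rw 2 [hP]
    rw [Matrix.mul_sub, Matrix.mul_one, ← Matrix.mul_assoc, hPQ, Matrix.zero_mul, sub_zero]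
  have hP1 : ‖P‖ ≤ 1 := norm_le_one_of_projection (by rw [hPt, hPP])
  have hPN : P * Nᵀ = 0 := by
    rw [← hPt, ← Matrix.transpose_mul, hP, Matrix.mul_sub, Matrix.mul_one, ← Matrix.mul_assoc, hQ1,
      sub_self, Matrix.transpose_zero]
  have hAT : Aᵀ * Dᵀ = 1 := by rw [← Matrix.transpose_mul, hDA, Matrix.transpose_one]
  have hADD : A * D * Dᵀ = Dᵀ := by
    rw [← hD.2.2.1, ← Matrix.transpose_mul, ← Matrix.mul_assoc, hD.2.1]
  have hPE : P * Eᵀ = - (P * A) := by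
    have h := hPN
    rw [hN, Matrix.transpose_add, Matrix.transpose_transpose, Matrix.mul_add] at h
    exact eq_neg_of_add_eq_zero_right h
  have hW : P * (Eᵀ * (D * Dᵀ)) = Q + Q * (E * Dᵀ) - Dᵀ := by
    rw [← Matrix.mul_assoc, hPE, Matrix.neg_mul, Matrix.mul_assoc, ← Matrix.mul_assoc A, hADD, hP,
      Matrix.sub_mul, Matrix.one_mul, Matrix.mul_assoc Q, hN, Matrix.add_mul, hAT, Matrix.mul_add,
      Matrix.mul_one]
    abel
  have hsplit : Q - Dᵀ = P * (Eᵀ * (D * Dᵀ)) - Q * (E * Dᵀ) := by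
    rw [hW]
    abel
  have horth : (Q * (E * Dᵀ))ᵀ * (P * (Eᵀ * (D * Dᵀ))) = 0 := by
    have h : Qᵀ * P = 0 := by
      rw [← hPt, ← Matrix.transpose_mul, hPQ, Matrix.transpose_zero]
    rw [Matrix.transpose_mul, Matrix.mul_assoc, ← Matrix.mul_assoc Qᵀ, h, Matrix.zero_mul,
      Matrix.mul_zero]
  have hU : ‖Q * (E * Dᵀ)‖ ≤ ‖E‖ * ‖D‖ * r := by
    calc ‖Q * (E * Dᵀ)‖ ≤ ‖Q‖ * (‖E‖ * ‖Dᵀ‖) :=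
          (Matrix.l2_opNorm_mul _ _).trans (by gcongr; exact Matrix.l2_opNorm_mul _ _)
      _ ≤ r * (‖E‖ * ‖D‖) := by rw [norm_transpose_real]; gcongr
      _ = _ := by ring
  have hW' : ‖P * (Eᵀ * (D * Dᵀ))‖ ≤ ‖E‖ * ‖D‖ * r := by
    calc ‖P * (Eᵀ * (D * Dᵀ))‖ ≤ ‖P‖ * (‖Eᵀ‖ * (‖D‖ * ‖Dᵀ‖)) := by
          refine (Matrix.l2_opNorm_mul _ _).trans ?_
          gcongr
          refine (Matrix.l2_opNorm_mul _ _).trans ?_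
          gcongr
          exact Matrix.l2_opNorm_mul _ _
      _ ≤ 1 * (‖E‖ * (‖D‖ * r)) := by rw [norm_transpose_real, norm_transpose_real]; gcongr
      _ = _ := by ring
  rw [hsplit]
  refine abs_le_of_sq_le_sq' ?_ (by positivity) |>.2
  rw [mul_pow, Real.sq_sqrt zero_le_two]
  have h1 := sq_norm_sub_le_of_orthogonal horth
  have h2 := pow_le_pow_left₀ (norm_nonneg _) hU 2
  have h3 := pow_le_pow_left₀ (norm_nonneg _) hW' 2
  linarith

lemma norm_toE_le {v : Fin n → ℝ} {c : ℝ} (hc : 0 ≤ c) (h : ∀ i, |v i| ≤ c) :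
    ‖toE v‖ ≤ √n * c := by
  rw [EuclideanSpace.norm_eq]
  calc √(∑ i, ‖toE v i‖ ^ 2) ≤ √(∑ _i : Fin n, c ^ 2) := by
        gcongr with i
        exact h i
    _ = √n * c := by
        rw [Finset.sum_const, Finset.card_univ, Fintype.card_fin, nsmul_eq_mul,
          Real.sqrt_mul (Nat.cast_nonneg _), Real.sqrt_sq hc]

end Norms

open scoped Matrix.Norms.L2Operator in
/-- **Combined floating point errors in matrix inversion and function evaluations.**
`‖(Aᵀ)†B𝕗 − P̄B𝕗̄‖ ≤ √(q+1)·f_M·‖A†‖·‖B‖·ε*·(√2Cκ(A)/(1 − Cκ(A)ε*)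
  + (C+1)/((1 − Cε*)(1 − Cκ(A)ε*)))`. -/
theorem combined_floating_point_error {n z q : ℕ} (εs C : ℝ) (hεs : 0 < εs) (hC : 0 < C)
    (A : Matrix (Fin n) (Fin z) ℝ) (hrank : A.rank = z)
    (Adag : Matrix (Fin z) (Fin n) ℝ) (hAdag : IsMPInv A Adag)
    (κ : ℝ) (hκ : κ = spec Adag * spec A) (hcond : C * εs * κ < 1)
    (B : Matrix (Fin z) (Fin (q + 1)) ℝ)
    (y : Fin (q + 1) → EuclideanSpace ℝ (Fin n))
    (Pbar : Matrix (Fin n) (Fin z) ℝ)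
    (Et : Matrix (Fin z) (Fin n) ℝ) (Ft : Matrix (Fin n) (Fin z) ℝ)
    (Q : Matrix (Fin n) (Fin z) ℝ) (hQ : IsMPInv (Aᵀ + Et) Q)
    (hPbar : Pbar + Ft = Q)
    (hEt : spec Et ≤ C * εs * spec A) (hFt : spec Ft ≤ C * εs * spec Pbar)
    (f fbar : EuclideanSpace ℝ (Fin n) → ℝ)
    (ε : Fin (q + 1) → ℝ) (hε : ∀ i, |ε i| ≤ εs)
    (hfbar : ∀ i, fbar (y i) = (1 + ε i) * f (y i))
    (fM : ℝ) (hfM : fM = ⨆ i, |f (y i)|) :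
    ‖toE (Matrix.mulVec Adagᵀ (Matrix.mulVec B fun i => f (y i)))
        - toE (Matrix.mulVec Pbar (Matrix.mulVec B fun i => fbar (y i)))‖
      ≤ Real.sqrt (q + 1) * fM * spec Adag * spec B * εs
          * (Real.sqrt 2 * C * κ / (1 - C * κ * εs)
              + (C + 1) / ((1 - C * εs) * (1 - C * κ * εs))) := by
  simp only [spec_eq_norm] at *
  -- For `z = 0` both sides vanish; here `κ = 0`, so `C ε* < 1` may fail.
  rcases Nat.eq_zero_or_pos z with hz | hz
  · subst hz
    have hD : Adag = 0 := Subsingleton.elim _ _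
    have h0 : ∀ (M : Matrix (Fin n) (Fin 0) ℝ) v, M *ᵥ v = 0 := fun M v => by
      rw [Subsingleton.elim v 0, Matrix.mulVec_zero]
    rw [h0, h0, hD, norm_zero, sub_self, norm_zero]
    simp
  have hDA : Adag * A = 1 := pinv_mul_eq_one hrank hAdag
  have hκ1 : 1 ≤ κ := by
    have : Nonempty (Fin z) := ⟨⟨0, hz⟩⟩
    have h1 : ‖(1 : Matrix (Fin z) (Fin z) ℝ)‖ = 1 := norm_one
    rw [hκ, ← h1, ← hDA]
    exact Matrix.l2_opNorm_mul _ _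
  have hCε : 0 < C * εs := mul_pos hC hεs
  have hc1 : 0 < 1 - C * εs := by nlinarith
  have hk : 0 < 1 - C * κ * εs := by nlinarith
  have hDE : ‖Adag‖ * ‖Et‖ ≤ C * κ * εs := by
    calc ‖Adag‖ * ‖Et‖ ≤ ‖Adag‖ * (C * εs * ‖A‖) := by gcongr
      _ = C * κ * εs := by rw [hκ]; ring
  set r := ‖Adag‖ / (1 - C * κ * εs) with hr
  have hr0 : 0 ≤ r := by positivity
  have hDr : ‖Adag‖ ≤ r := by
    rw [hr, le_div_iff₀ hk]
    have : 0 ≤ C * κ * εs := by positivity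
    nlinarith [mul_nonneg (norm_nonneg Adag) this]
  have hQr : ‖Q‖ ≤ r := by
    rw [hr, le_div_iff₀ hk]
    have := norm_pinv_le hDA hQ
    nlinarith [mul_le_mul_of_nonneg_right hDE (norm_nonneg Q)]
  have hdiff : ‖Q - Adagᵀ‖ ≤ √2 * (C * κ * εs * r) := by
    refine (norm_pinv_sub_le hDA hAdag hQ hDr hQr).trans ?_
    rw [mul_comm ‖Et‖]
    gcongr
  have hP : ‖Pbar‖ ≤ r / (1 - C * εs) := by
    rw [le_div_iff₀ hc1]
    have h1 : ‖Pbar‖ ≤ ‖Q‖ + ‖Ft‖ := by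
      rw [eq_sub_of_add_eq hPbar]
      exact norm_sub_le _ _
    linarith
  have hle : ∀ i, |f (y i)| ≤ fM := fun i => by
    rw [hfM]
    exact le_ciSup (f := fun i => |f (y i)|) (Set.finite_range _).bddAbove i
  have hfM0 : 0 ≤ fM := (abs_nonneg _).trans (hle 0)
  set F : Fin (q + 1) → ℝ := fun i => f (y i) with hF
  set G : Fin (q + 1) → ℝ := fun i => fbar (y i) with hG
  have hFn : ‖toE F‖ ≤ √(q + 1) * fM := by
    have := norm_toE_le hfM0 hle
    push_cast at this
    exact this
  have hFG : ‖toE (F - G)‖ ≤ √(q + 1) * (εs * fM) := by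
    have : ∀ i, |(F - G) i| ≤ εs * fM := fun i => by
      have h1 : (F - G) i = - (ε i * f (y i)) := by
        simp only [hF, hG, Pi.sub_apply, hfbar]
        ring
      rw [h1, abs_neg, abs_mul]
      exact mul_le_mul (hε i) (hle i) (abs_nonneg _) hεs.le
    have := norm_toE_le (by positivity) this
    push_cast at this
    exact this
  have hsum : toE (Adagᵀ *ᵥ (B *ᵥ F)) - toE (Pbar *ᵥ (B *ᵥ G))
      = - toE ((Q - Adagᵀ) *ᵥ (B *ᵥ F)) + toE (Ft *ᵥ (B *ᵥ F))
        + toE (Pbar *ᵥ (B *ᵥ (F - G))) := by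
    have : Adagᵀ *ᵥ (B *ᵥ F) - Pbar *ᵥ (B *ᵥ G)
        = - ((Q - Adagᵀ) *ᵥ (B *ᵥ F)) + Ft *ᵥ (B *ᵥ F) + Pbar *ᵥ (B *ᵥ (F - G)) := by
      rw [← hPbar]
      simp only [Matrix.sub_mulVec, Matrix.add_mulVec, Matrix.mulVec_sub]
      abel
    exact congrArg toE this
  have hb : ∀ (M : Matrix (Fin n) (Fin z) ℝ) v, ‖toE (M *ᵥ (B *ᵥ v))‖ ≤ ‖M‖ * (‖B‖ * ‖toE v‖) :=
    fun M v => (norm_toE_mulVec_le _ _).trans (by gcongr; exact norm_toE_mulVec_le _ _)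
  rw [hsum]
  calc _ ≤ ‖toE ((Q - Adagᵀ) *ᵥ (B *ᵥ F))‖ + ‖toE (Ft *ᵥ (B *ᵥ F))‖
        + ‖toE (Pbar *ᵥ (B *ᵥ (F - G)))‖ := by
        refine (norm_add₃_le).trans ?_
        rw [norm_neg]
    _ ≤ √2 * (C * κ * εs * r) * (‖B‖ * (√(q + 1) * fM))
        + C * εs * (r / (1 - C * εs)) * (‖B‖ * (√(q + 1) * fM))
        + r / (1 - C * εs) * (‖B‖ * (√(q + 1) * (εs * fM))) := by
        have hF' : ‖Ft‖ ≤ C * εs * (r / (1 - C * εs)) := hFt.trans (by gcongr)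
        gcongr
        · exact (hb _ _).trans (by gcongr)
        · exact (hb _ _).trans (by gcongr)
        · exact (hb _ _).trans (by gcongr)
    _ = _ := by
        rw [hr]
        field_simp
        ring
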